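/- arXiv:1604.03897 — 2 statements merged into one kernel-verified Lean document; each statement's English description precedes it below -/
import Mathlib

section
/- Vanishing locus of the section s_v: given a Q-polarized Hodge structure z of even weight w on V and v ∈ V, let v_z := Σ_{p > w/2} v^{p,q} (the sum of the components of v in the V^{p,q} with p > w/2) and h_z(v) := 2·Q(C v_z, conj(v_z)). Then h_z(v) ≥ 0, with equality if and only if v ∈ V^{w/2,w/2}; moreover, if v ≠ 0 and v ∈ V^{w/2,w/2}, then Q(v,v) > 0. -/
noncomputable section

/-- Data exhibiting the complex vector space `W` as the complexification `V_ℂ` of the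
real vector space `V`: a real embedding `ι`, and a complex conjugation `conj` (a
real-linear, antilinear involution) whose fixed points are exactly `ι(V)`, with
`W = ι(V) ⊕ i·ι(V)`. -/
structure Complexification (V W : Type*) [AddCommGroup V] [Module ℝ V]
    [AddCommGroup W] [Module ℂ W] where
  ι : V →ₗ[ℝ] W
  conj : W →ₗ[ℝ] W
  conj_conj : ∀ x, conj (conj x) = x
  conj_smul : ∀ (a : ℂ) (x : W), conj (a • x) = (starRingEnd ℂ a) • conj x
  conj_ι : ∀ v, conj (ι v) = ι v
  ι_injective : Function.Injective ι
  exists_re_im : ∀ x : W, ∃ v₁ v₂ : V, x = ι v₁ + Complex.I • ι v₂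
  fixed_eq_range : ∀ x : W, conj x = x → ∃ v, x = ι v

/-- A `Q`-polarized Hodge structure of weight `w` on `V`, presented as the family of
Hodge subspaces `Vpq p = V^{p,w-p}` of the complexification `W = V_ℂ`:
`W = ⊕_{p+q=w} V^{p,q}`, conjugation maps `V^{p,q}` into `V^{q,p}`,
`Q(V^{p,q},V^{p',q'}) = 0` unless `p' = w − p`, and `i^{p−q}·Q(u, conj u) > 0` for
`0 ≠ u ∈ V^{p,q}` (here `i^{p-q} = i^p·(−i)^q`). -/
structure IsPolarizedHodgeStructure {V W : Type*} [AddCommGroup V] [Module ℝ V]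
    [AddCommGroup W] [Module ℂ W] (c : Complexification V W)
    (QC : W →ₗ[ℂ] W →ₗ[ℂ] ℂ) (w : ℕ) (Vpq : ℕ → Submodule ℂ W) : Prop where
  isInternal : DirectSum.IsInternal fun p : Fin (w + 1) => Vpq (p : ℕ)
  bot_of_gt : ∀ p, w < p → Vpq p = ⊥
  conj_mem : ∀ p, ∀ x ∈ Vpq p, c.conj x ∈ Vpq (w - p)
  isotropic : ∀ p p', p + p' ≠ w → ∀ x ∈ Vpq p, ∀ y ∈ Vpq p', QC x y = 0
  positivity : ∀ p, ∀ x ∈ Vpq p, x ≠ 0 →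
    ∃ r : ℝ, 0 < r ∧ (Complex.I ^ p * (-Complex.I) ^ (w - p)) * QC x (c.conj x) = (r : ℂ)

/-!
The Weil form `H(x, y) = Q(C x, conj y)` is positive definite on all of `V_ℂ`: the Hodge subspaces
are mutually `H`-orthogonal, and the polarization makes `H` positive on each of them. Hence
`h_z(v) = 2 H(v_z, v_z)` is nonnegative and vanishes exactly when `v_z = 0`. As conjugation
exchanges the components `v^{p,q}` and `v^{q,p}` of the real vector `v`, this leaves only the
middle component. On `V^{w/2,w/2}` the Weil operator is the identity, so there `Q(v, v) = H(v, v)`.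
-/

lemma sum_mem_iff_of_iSupIndep {R M ι : Type*} [Ring R] [AddCommGroup M] [Module R M]
    {A : ι → Submodule R M} (hA : iSupIndep A) {s : Finset ι} {a : ι → M}
    (ha : ∀ i ∈ s, a i ∈ A i) {j : ι} (hj : j ∈ s) :
    ∑ i ∈ s, a i ∈ A j ↔ ∀ i ∈ s, i ≠ j → a i = 0 := by
  classical
  constructor
  · intro hmem i hi hij
    have hsum : ∑ i ∈ s, a i = ∑ i ∈ s, if i = j then ∑ k ∈ s, a k else 0 := by
      rw [Finset.sum_ite_eq', if_pos hj]
    have hite : ∀ i ∈ s, (if i = j then ∑ k ∈ s, a k else 0) ∈ A i := by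
      intro i _
      split_ifs with hij
      · exact hij ▸ hmem
      · exact zero_mem _
    rw [(iSupIndep_iff_finsetSum_eq_imp_eq A).mp hA s a _
      (fun i hi ↦ ⟨ha i hi, hite i hi⟩) hsum i hi, if_neg hij]
  · intro h
    rw [Finset.sum_eq_single_of_mem j hj h]
    exact ha j hj

/-- `C` is the Weil operator of the Hodge structure `V^{p,w-p} = Vpq p`: it acts on `V^{p,q}` as
`i^{p-q}`, encoded as `i^p (-i)^q` to avoid negative exponents. -/
def IsWeilOperator {W : Type*} [AddCommGroup W] [Module ℂ W] (w : ℕ) (Vpq : ℕ → Submodule ℂ W)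
    (C : W →ₗ[ℂ] W) : Prop :=
  ∀ p, ∀ x ∈ Vpq p, C x = (Complex.I ^ p * (-Complex.I) ^ (w - p)) • x

section

open scoped ComplexOrder

variable {V W : Type*} [AddCommGroup V] [Module ℝ V] [AddCommGroup W] [Module ℂ W]
  {c : Complexification V W} {QC : W →ₗ[ℂ] W →ₗ[ℂ] ℂ} {w : ℕ} {Vpq : ℕ → Submodule ℂ W}
  {C : W →ₗ[ℂ] W}

namespace IsWeilOperator

lemma map_mem (hC : IsWeilOperator w Vpq C) {p : ℕ} {x : W} (hx : x ∈ Vpq p) : C x ∈ Vpq p :=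
  hC p x hx ▸ Submodule.smul_mem _ _ hx

lemma apply_of_mem_middle (hC : IsWeilOperator w Vpq C) (hw : Even w) {x : W}
    (hx : x ∈ Vpq (w / 2)) : C x = x := by
  rw [hC _ x hx, show w - w / 2 = w / 2 by grind, ← mul_pow, mul_neg, Complex.I_mul_I, neg_neg,
    one_pow, one_smul]

end IsWeilOperator

namespace Complexification

variable (c QC C) in
/-- The Weil form `H(x, y) = Q(C x, conj y)`, linear in `x` and antilinear in `y`. -/
def weilForm : W →ₗ[ℂ] W →ₗ⋆[ℂ] ℂ :=
  LinearMap.mk₂'ₛₗ (RingHom.id ℂ) (starRingEnd ℂ) (fun x y ↦ QC (C x) (c.conj y))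
    (by simp) (by simp) (by simp) (by simp [c.conj_smul])

lemma weilForm_apply (x y : W) : c.weilForm QC C x y = QC (C x) (c.conj y) := rfl

end Complexification

namespace IsPolarizedHodgeStructure

protected lemma iSupIndep (hz : IsPolarizedHodgeStructure c QC w Vpq) : iSupIndep Vpq := by
  have lt_of_ne_bot : ∀ p, Vpq p ≠ ⊥ → p < w + 1 := fun p hp ↦
    Nat.lt_succ_of_le (not_lt.mp (mt (hz.bot_of_gt p) hp))
  let toFin : {p // Vpq p ≠ ⊥} → Fin (w + 1) := fun p ↦ ⟨p, lt_of_ne_bot p p.2⟩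
  have toFin_injective : Function.Injective toFin := fun p q hpq ↦
    Subtype.ext (congrArg Fin.val hpq)
  exact iSupIndep_ne_bot.mp (hz.isInternal.submodule_iSupIndep.comp toFin_injective)

lemma exists_eq_sum (hz : IsPolarizedHodgeStructure c QC w Vpq) (x : W) :
    ∃ a : ℕ → W, (∀ p, a p ∈ Vpq p) ∧ x = ∑ p ∈ Finset.range (w + 1), a p := by
  have hspan : ⨆ p ∈ Finset.range (w + 1), Vpq p = ⊤ := by
    rw [eq_top_iff, ← hz.isInternal.submodule_iSup_eq_top]
    exact iSup_le fun p ↦ le_biSup Vpq (Finset.mem_range.mpr p.2)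
  obtain ⟨a, ha⟩ := (Submodule.mem_iSup_finset_iff_exists_sum Vpq x).mp
    (hspan ▸ Submodule.mem_top : x ∈ ⨆ p ∈ Finset.range (w + 1), Vpq p)
  exact ⟨fun p ↦ a p, fun p ↦ (a p).2, ha.symm⟩

lemma weilForm_eq_zero_of_ne (hz : IsPolarizedHodgeStructure c QC w Vpq)
    (hC : IsWeilOperator w Vpq C) {p q : ℕ} (hq : q ≤ w) (hpq : p ≠ q) {x y : W}
    (hx : x ∈ Vpq p) (hy : y ∈ Vpq q) : c.weilForm QC C x y = 0 :=
  hz.isotropic p (w - q) (by lia) _ (hC.map_mem hx) _ (hz.conj_mem q y hy)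

lemma weilForm_self_pos_of_mem (hz : IsPolarizedHodgeStructure c QC w Vpq)
    (hC : IsWeilOperator w Vpq C) {p : ℕ} {x : W} (hx : x ∈ Vpq p) (hx0 : x ≠ 0) :
    0 < c.weilForm QC C x x := by
  obtain ⟨r, hr, hr'⟩ := hz.positivity p x hx hx0
  rw [c.weilForm_apply, hC p x hx, map_smul, LinearMap.smul_apply, smul_eq_mul, hr']
  exact_mod_cast hr

lemma weilForm_sum_self (hz : IsPolarizedHodgeStructure c QC w Vpq)
    (hC : IsWeilOperator w Vpq C) {a : ℕ → W} (ha : ∀ p, a p ∈ Vpq p) :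
    c.weilForm QC C (∑ p ∈ Finset.range (w + 1), a p) (∑ p ∈ Finset.range (w + 1), a p) =
      ∑ p ∈ Finset.range (w + 1), c.weilForm QC C (a p) (a p) := by
  rw [map_sum (c.weilForm QC C _)]
  refine Finset.sum_congr rfl fun q hq ↦ ?_
  rw [map_sum, LinearMap.sum_apply]
  exact Finset.sum_eq_single_of_mem q hq fun p _ hpq ↦
    hz.weilForm_eq_zero_of_ne hC (Finset.mem_range_succ_iff.mp hq) hpq (ha p) (ha q)

lemma weilForm_self_pos (hz : IsPolarizedHodgeStructure c QC w Vpq)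
    (hC : IsWeilOperator w Vpq C) {x : W} (hx : x ≠ 0) : 0 < c.weilForm QC C x x := by
  obtain ⟨a, ha, rfl⟩ := hz.exists_eq_sum x
  obtain ⟨q, hq, haq⟩ := Finset.exists_ne_zero_of_sum_ne_zero hx
  rw [hz.weilForm_sum_self hC ha]
  refine Finset.sum_pos' (fun p _ ↦ ?_) ⟨q, hq, hz.weilForm_self_pos_of_mem hC (ha q) haq⟩
  obtain hp | hp := eq_or_ne (a p) 0
  · simp [hp]
  · exact (hz.weilForm_self_pos_of_mem hC (ha p) hp).le

lemma weilForm_self_nonneg (hz : IsPolarizedHodgeStructure c QC w Vpq)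
    (hC : IsWeilOperator w Vpq C) (x : W) : 0 ≤ c.weilForm QC C x x := by
  obtain rfl | hx := eq_or_ne x 0
  · simp
  · exact (hz.weilForm_self_pos hC hx).le

lemma weilForm_self_eq_zero_iff (hz : IsPolarizedHodgeStructure c QC w Vpq)
    (hC : IsWeilOperator w Vpq C) {x : W} : c.weilForm QC C x x = 0 ↔ x = 0 :=
  ⟨fun h ↦ by_contra fun hx ↦ (hz.weilForm_self_pos hC hx).ne' h, fun h ↦ by simp [h]⟩

lemma conj_component (hz : IsPolarizedHodgeStructure c QC w Vpq) {v : V} {a : ℕ → W}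
    (ha : ∀ p, a p ∈ Vpq p) (hv : c.ι v = ∑ p ∈ Finset.range (w + 1), a p) {p : ℕ}
    (hp : p ≤ w) : c.conj (a (w - p)) = a p := by
  have hmem : ∀ q ∈ Finset.range (w + 1), c.conj (a (w - q)) ∈ Vpq q := fun q hq ↦ by
    simpa [Nat.sub_sub_self (Finset.mem_range_succ_iff.mp hq)] using hz.conj_mem _ _ (ha (w - q))
  have hsum : ∑ q ∈ Finset.range (w + 1), c.conj (a (w - q)) =
      ∑ q ∈ Finset.range (w + 1), a q :=
    calc ∑ q ∈ Finset.range (w + 1), c.conj (a (w - q))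
      _ = ∑ q ∈ Finset.range (w + 1), c.conj (a q) :=
        Finset.sum_range_reflect (fun q ↦ c.conj (a q)) (w + 1)
      _ = c.conj (c.ι v) := by rw [hv, map_sum]
      _ = ∑ q ∈ Finset.range (w + 1), a q := by rw [c.conj_ι, hv]
  exact (iSupIndep_iff_finsetSum_eq_imp_eq Vpq).mp hz.iSupIndep _ _ _
    (fun q hq ↦ ⟨hmem q hq, ha q⟩) hsum p (Finset.mem_range_succ_iff.mpr hp)

lemma ι_mem_middle_iff (hz : IsPolarizedHodgeStructure c QC w Vpq) (hw : Even w) {v : V}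
    {a : ℕ → W} (ha : ∀ p, a p ∈ Vpq p) (hv : c.ι v = ∑ p ∈ Finset.range (w + 1), a p) :
    c.ι v ∈ Vpq (w / 2) ↔ ∑ p ∈ Finset.Ioc (w / 2) w, a p = 0 := by
  rw [hv, sum_mem_iff_of_iSupIndep hz.iSupIndep (fun p _ ↦ ha p)
    (Finset.mem_range_succ_iff.mpr (Nat.div_le_self w 2))]
  constructor
  · intro h
    refine Finset.sum_eq_zero fun p hp ↦ ?_
    rw [Finset.mem_Ioc] at hp
    exact h p (Finset.mem_range_succ_iff.mpr hp.2) hp.1.ne'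
  · intro h p hp hne
    have hupper : ∀ q ∈ Finset.Ioc (w / 2) w, a q = 0 :=
      (iSupIndep_iff_finsetSum_eq_zero_imp_eq_zero Vpq).mp hz.iSupIndep _ a (fun q _ ↦ ha q) h
    have hpw : p ≤ w := Finset.mem_range_succ_iff.mp hp
    obtain hlt | hgt := lt_or_gt_of_ne hne
    · rw [← hz.conj_component ha hv hpw, hupper (w - p) (Finset.mem_Ioc.mpr (by grind)), map_zero]
    · exact hupper p (Finset.mem_Ioc.mpr ⟨hgt, hpw⟩)

lemma pos_of_ι_mem_middle (hz : IsPolarizedHodgeStructure c QC w Vpq)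
    (hC : IsWeilOperator w Vpq C) (hw : Even w) {Q : LinearMap.BilinForm ℝ V}
    (hQC : ∀ u v : V, QC (c.ι u) (c.ι v) = (Q u v : ℂ)) {v : V} (hv0 : v ≠ 0)
    (hv : c.ι v ∈ Vpq (w / 2)) : 0 < Q v v := by
  have hpos := hz.weilForm_self_pos hC ((map_ne_zero_iff c.ι c.ι_injective).mpr hv0)
  rw [c.weilForm_apply, hC.apply_of_mem_middle hw hv, c.conj_ι, hQC] at hpos
  exact_mod_cast hpos

end IsPolarizedHodgeStructure

theorem vanishing_locus_s_v_general {Q : LinearMap.BilinForm ℝ V}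
    (hQC : ∀ u v : V, QC (c.ι u) (c.ι v) = (Q u v : ℂ)) (hw : Even w)
    (hz : IsPolarizedHodgeStructure c QC w Vpq) (hC : IsWeilOperator w Vpq C)
    {v : V} {a : ℕ → W} (ha : ∀ p, a p ∈ Vpq p)
    (hv : c.ι v = ∑ p ∈ Finset.range (w + 1), a p) :
    (∃ r : ℝ,
      2 * QC (C (∑ p ∈ Finset.Ioc (w / 2) w, a p))
          (c.conj (∑ p ∈ Finset.Ioc (w / 2) w, a p)) = (r : ℂ) ∧
      0 ≤ r ∧ (r = 0 ↔ c.ι v ∈ Vpq (w / 2))) ∧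
    (v ≠ 0 → c.ι v ∈ Vpq (w / 2) → 0 < Q v v) := by
  refine ⟨?_, hz.pos_of_ι_mem_middle hC hw hQC⟩
  rw [hz.ι_mem_middle_iff hw ha hv, ← hz.weilForm_self_eq_zero_iff hC, ← c.weilForm_apply]
  obtain ⟨s, hs, hsr⟩ := RCLike.nonneg_iff_exists_ofReal.mp
    (hz.weilForm_self_nonneg hC (∑ p ∈ Finset.Ioc (w / 2) w, a p))
  rw [← hsr]
  exact ⟨2 * s, by simp, by positivity, by simp⟩

end

/-- **Vanishing locus of the section `s_v`.** Given a `Q`-polarized Hodge structure `z`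
of even weight `w` on `V` with Weil operator `C`, and `v ∈ V` with Hodge components
`comp p ∈ V^{p,w-p}`, set `v_z = Σ_{p > w/2} comp p` and `h_z(v) = 2·Q(C v_z, conj v_z)`.
Then `h_z(v)` is real, `h_z(v) ≥ 0`, with equality iff `v ∈ V^{w/2,w/2}`; moreover if
`v ≠ 0` lies in `V^{w/2,w/2}` then `Q(v,v) > 0`. -/
theorem vanishing_locus_s_v
    {V W : Type*} [AddCommGroup V] [Module ℝ V] [FiniteDimensional ℝ V]
    [AddCommGroup W] [Module ℂ W]
    (c : Complexification V W)
    (Q : LinearMap.BilinForm ℝ V) (hQsymm : ∀ u v, Q u v = Q v u)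
    (hQnd : Q.Nondegenerate)
    (QC : W →ₗ[ℂ] W →ₗ[ℂ] ℂ) (hQC : ∀ u v : V, QC (c.ι u) (c.ι v) = (Q u v : ℂ))
    (w : ℕ) (hw : 0 < w) (hweven : Even w)
    (Vpq : ℕ → Submodule ℂ W)
    (hz : IsPolarizedHodgeStructure c QC w Vpq)
    (C : W →ₗ[ℂ] W)
    (hC : ∀ p, ∀ x ∈ Vpq p, C x = (Complex.I ^ p * (-Complex.I) ^ (w - p)) • x) :
    ∀ v : V, ∀ comp : ℕ → W,
      (∀ p, comp p ∈ Vpq p) →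
      c.ι v = ∑ p ∈ Finset.range (w + 1), comp p →
      (∃ r : ℝ,
        2 * QC (C (∑ p ∈ Finset.Ioc (w / 2) w, comp p))
            (c.conj (∑ p ∈ Finset.Ioc (w / 2) w, comp p)) = (r : ℂ) ∧
        0 ≤ r ∧ (r = 0 ↔ c.ι v ∈ Vpq (w / 2))) ∧
      (v ≠ 0 → c.ι v ∈ Vpq (w / 2) → 0 < Q v v) :=
  fun _ _ hcomp hv ↦ vanishing_locus_s_v_general hQC hweven hz hC hcomp hv
end
end

section
/- Transitivity on the Hodge locus of a vector: let v ∈ V with Q(v,v) > 0 and let G_v = {g ∈ O(V,Q) : gv = v}. Then G_v acts transitively on the set of Q-polarized Hodge structures of even weight w and fixed type h on V for which v ∈ V^{w/2,w/2}: for any two such Hodge structures there exists g ∈ G_v whose ℂ-linear extension maps the Hodge subspaces of the first onto the corresponding Hodge subspaces of the second. -/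
noncomputable section

/-!
Two Hodge structures of the same type are compared one Hodge subspace at a time. On `V^{p,q}` the
form `i^{p-q} Q(x, conj y)` is a Hermitian inner product, so equality of dimensions gives a unitary
isomorphism between corresponding Hodge subspaces. These are chosen freely for half of the pairs
`{p, q}` with `p ≠ q` and transported to the other half by complex conjugation. The middle subspace
`V^{w/2,w/2}` is defined over `ℝ`, and `Q` is positive definite on its real points; there one takes
the complexification of a real isometry, which may be chosen to fix any given subspace of real
points common to both structures, such as the line through `v`. The resulting family commutes with
conjugation, so its direct sum descends to an isometry of `V`.
-/

open Complex Function Module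

section General

/-- Isometries are taken with respect to inner product cores because the inner products below live
on subspaces that carry no normed structure of their own. -/
theorem exists_linearEquiv_inner_eq_extending {𝕜 E F : Type*} [RCLike 𝕜]
    [AddCommGroup E] [Module 𝕜 E] [FiniteDimensional 𝕜 E]
    [AddCommGroup F] [Module 𝕜 F] [FiniteDimensional 𝕜 F]
    (cE : InnerProductSpace.Core 𝕜 E) (cF : InnerProductSpace.Core 𝕜 F)
    (hrank : finrank 𝕜 E = finrank 𝕜 F) (S : Submodule 𝕜 E) (L : S →ₗ[𝕜] F)
    (hL : ∀ x y : S, cF.inner (L x) (L y) = cE.inner x y) :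
    ∃ e : E ≃ₗ[𝕜] F, (∀ x y, cF.inner (e x) (e y) = cE.inner x y) ∧ ∀ x : S, e x = L x := by
  let : NormedAddCommGroup E := cE.toNormedAddCommGroup
  let : InnerProductSpace 𝕜 E := InnerProductSpace.ofCore cE.toCore
  let : NormedAddCommGroup F := cF.toNormedAddCommGroup
  let : InnerProductSpace 𝕜 F := InnerProductSpace.ofCore cF.toCore
  let e₀ : E ≃ₗᵢ[𝕜] F :=
    (stdOrthonormalBasis 𝕜 E).equiv (stdOrthonormalBasis 𝕜 F) (finCongr hrank)
  let L₀ : S →ₗᵢ[𝕜] E := e₀.symm.toLinearIsometry.comp (L.isometryOfInner hL)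
  let e : E ≃ₗᵢ[𝕜] F := (L₀.extend.toLinearIsometryEquiv rfl).trans e₀
  have heL (x : S) : e x = L x := calc
    e x = e₀ (L₀.extend x) := rfl
    _ = e₀ (e₀.symm (L x)) := by rw [L₀.extend_apply]; rfl
    _ = L x := e₀.apply_symm_apply _
  exact ⟨e.toLinearEquiv, e.inner_map_map, heL⟩

theorem exists_equivariant_choice {ι α : Type*} [LinearOrder ι] {σ : ι → ι} {τ : α → α}
    (hσ : Involutive σ) (hτ : Involutive τ) {P : ι → α → Prop}
    (hP : ∀ i a, P i a → P (σ i) (τ a)) (hex : ∀ i, ∃ a, P i a ∧ (σ i = i → τ a = a)) :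
    ∃ φ : ι → α, (∀ i, P i (φ i)) ∧ ∀ i, φ (σ i) = τ (φ i) := by
  choose φ₀ hφ₀ hfix using hex
  refine ⟨fun i => if i ≤ σ i then φ₀ i else τ (φ₀ (σ i)), fun i => ?_, fun i => ?_⟩
  · dsimp only
    split_ifs
    · exact hφ₀ i
    · simpa only [hσ i] using hP _ _ (hφ₀ (σ i))
  · dsimp only
    rw [hσ i]
    rcases lt_trichotomy i (σ i) with h | h | h
    · rw [if_neg h.not_ge, if_pos h.le]
    · rw [if_pos h.ge, if_pos h.le, ← h, hfix i h.symm]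
    · rw [if_pos h.le, if_neg h.not_ge, hτ]

theorem exists_linearMap_eqOn_of_isInternal {ι R M N : Type*} [DecidableEq ι] [Semiring R]
    [AddCommMonoid M] [Module R M] [AddCommMonoid N] [Module R N] {A : ι → Submodule R M}
    (hA : DirectSum.IsInternal A) (f : ι → M →ₗ[R] N) :
    ∃ F : M →ₗ[R] N, ∀ i, ∀ x ∈ A i, F x = f i x := by
  let e := LinearEquiv.ofBijective (DirectSum.coeLinearMap A) hA
  refine ⟨DirectSum.toModule R ι N (fun i => f i ∘ₗ (A i).subtype) ∘ₗ e.symm.toLinearMap,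
    fun i x hx => ?_⟩
  have hx_symm : e.symm x = DirectSum.lof R ι (fun i => A i) i ⟨x, hx⟩ :=
    e.symm_apply_eq.2 (DirectSum.coeLinearMap_lof A i ⟨x, hx⟩).symm
  simp [hx_symm]

open TensorProduct in
theorem exists_eq_one_tmul_add_I_tmul {V : Type*} [AddCommGroup V] [Module ℝ V]
    (z : ℂ ⊗[ℝ] V) : ∃ a b : V, z = 1 ⊗ₜ a + I ⊗ₜ b := by
  induction z with
  | zero => exact ⟨0, 0, by simp⟩
  | tmul z v =>
    refine ⟨z.re • v, z.im • v, ?_⟩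
    rw [← smul_tmul, ← smul_tmul, ← add_tmul]
    congr 1
    simp
  | add _ _ hx hy =>
    obtain ⟨a, b, rfl⟩ := hx
    obtain ⟨a', b', rfl⟩ := hy
    exact ⟨a + a', b + b', by simp only [tmul_add]; abel⟩

theorem conj_I_pow_mul_neg_I_pow {p q : ℕ} (hpq : Even (p + q)) :
    starRingEnd ℂ (I ^ p * (-I) ^ q) = I ^ p * (-I) ^ q := by
  have hswap : (-I) ^ p * I ^ q = (-1) ^ (p + q) * (I ^ p * (-I) ^ q) := by
    rw [neg_pow, neg_pow I q, pow_add]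
    have hsign : (-1 : ℂ) ^ q * (-1) ^ q = 1 := by rw [← mul_pow, neg_one_mul, neg_neg, one_pow]
    linear_combination (-(-1) ^ p * I ^ p * I ^ q) * hsign
  rw [map_mul, map_pow, map_pow, map_neg, conj_I, neg_neg, hswap, hpq.neg_one_pow, one_mul]

theorem val_add_val_rev {n : ℕ} (i : Fin (n + 1)) : (i : ℕ) + i.rev = n := by
  rw [Fin.val_rev]
  omega

end General

namespace Complexification

variable {V W : Type*} [AddCommGroup V] [Module ℝ V] [AddCommGroup W] [Module ℂ W]
  (c : Complexification V W)

theorem conj_ι_add_I_smul_ι (a b : V) : c.conj (c.ι a + I • c.ι b) = c.ι a - I • c.ι b := by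
  rw [map_add, c.conj_smul, c.conj_ι, c.conj_ι, conj_I, neg_smul, sub_eq_add_neg]

theorem ι_add_I_smul_ι_eq_zero {a b : V} (h : c.ι a + I • c.ι b = 0) : a = 0 ∧ b = 0 := by
  have hconj : c.ι a - I • c.ι b = 0 := by rw [← conj_ι_add_I_smul_ι, h, map_zero]
  have ha : c.ι a = 0 := by
    have h_two : (2 : ℂ) • c.ι a = 0 := by
      rw [two_smul, ← add_add_sub_cancel (c.ι a) (c.ι a) (I • c.ι b), h, hconj, add_zero]
    exact (smul_eq_zero.1 h_two).resolve_left two_ne_zero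
  have hb : c.ι b = 0 := by
    rw [ha, zero_add] at h
    exact (smul_eq_zero.1 h).resolve_left I_ne_zero
  exact ⟨(map_eq_zero_iff c.ι c.ι_injective).1 ha, (map_eq_zero_iff c.ι c.ι_injective).1 hb⟩

open TensorProduct in
theorem isBaseChange : IsBaseChange ℂ c.ι := by
  refine ⟨(injective_iff_map_eq_zero _).2 fun z hz => ?_, fun x => ?_⟩
  · obtain ⟨a, b, rfl⟩ := exists_eq_one_tmul_add_I_tmul z
    obtain ⟨rfl, rfl⟩ := c.ι_add_I_smul_ι_eq_zero (by simpa using hz)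
    simp
  · obtain ⟨a, b, rfl⟩ := c.exists_re_im x
    exact ⟨1 ⊗ₜ[ℝ] a + I ⊗ₜ[ℝ] b, by simp⟩

theorem finiteDimensional [FiniteDimensional ℝ V] (c : Complexification V W) :
    FiniteDimensional ℂ W :=
  Module.Finite.equiv c.isBaseChange.equiv

/-- The conjugate `x ↦ conj (f (conj x))` of a complex-linear endomorphism of `V_ℂ`; its fixed
points are the endomorphisms defined over `ℝ`. -/
def conjEnd (f : W →ₗ[ℂ] W) : W →ₗ[ℂ] W where
  toFun x := c.conj (f (c.conj x))
  map_add' x y := by simp only [map_add]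
  map_smul' z x := by simp only [c.conj_smul, map_smul, Complex.conj_conj, RingHom.id_apply]

@[simp]
theorem conjEnd_apply (f : W →ₗ[ℂ] W) (x : W) : c.conjEnd f x = c.conj (f (c.conj x)) := rfl

theorem conjEnd_involutive : Involutive c.conjEnd := fun f => by
  ext x
  simp only [conjEnd_apply, c.conj_conj]

/-- The complex-linear extension of a real-linear endomorphism of `V` to `V_ℂ`. -/
def complexify (g : V →ₗ[ℝ] V) : W →ₗ[ℂ] W := c.isBaseChange.lift (c.ι ∘ₗ g)

@[simp]
theorem complexify_ι (g : V →ₗ[ℝ] V) (u : V) : c.complexify g (c.ι u) = c.ι (g u) :=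
  c.isBaseChange.lift_eq _ u

theorem conjEnd_complexify (g : V →ₗ[ℝ] V) : c.conjEnd (c.complexify g) = c.complexify g :=
  c.isBaseChange.algHom_ext _ _ fun u => by simp only [conjEnd_apply, c.conj_ι, complexify_ι]

theorem exists_complexify_eq {F : W →ₗ[ℂ] W} (hF : c.conjEnd F = F) :
    ∃ g : V →ₗ[ℝ] V, c.complexify g = F := by
  have hreal (u : V) : F (c.ι u) ∈ LinearMap.range c.ι := by
    have hfixed : c.conj (F (c.ι u)) = F (c.ι u) := by
      simpa only [conjEnd_apply, c.conj_ι] using LinearMap.congr_fun hF (c.ι u)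
    obtain ⟨u', hu'⟩ := c.fixed_eq_range _ hfixed
    exact ⟨u', hu'.symm⟩
  let e := LinearEquiv.ofInjective c.ι c.ι_injective
  refine ⟨e.symm ∘ₗ (F.restrictScalars ℝ ∘ₗ c.ι).codRestrict _ hreal,
    c.isBaseChange.algHom_ext _ _ fun u => ?_⟩
  rw [complexify_ι]
  exact congrArg Subtype.val (e.apply_symm_apply ⟨F (c.ι u), hreal u⟩)

theorem complexify_injective_of_injective {g : V →ₗ[ℝ] V} (hg : Injective g) :
    Injective (c.complexify g) := by
  refine (injective_iff_map_eq_zero _).2 fun x hx => ?_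
  obtain ⟨a, b, rfl⟩ := c.exists_re_im x
  rw [map_add, map_smul, complexify_ι, complexify_ι] at hx
  obtain ⟨ha, hb⟩ := c.ι_add_I_smul_ι_eq_zero hx
  simp [(map_eq_zero_iff g hg).1 ha, (map_eq_zero_iff g hg).1 hb]

/-- The real points of a complex subspace of `V_ℂ`, as a subspace of `V` itself rather than of
`V_ℂ`. -/
def realPoints (A : Submodule ℂ W) : Submodule ℝ V :=
  (A.restrictScalars ℝ).comap c.ι

section Form

variable {c} {Q : LinearMap.BilinForm ℝ V} {QC : W →ₗ[ℂ] W →ₗ[ℂ] ℂ}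

theorem extension_symm (hQsymm : ∀ u v, Q u v = Q v u)
    (hQC : ∀ u v : V, QC (c.ι u) (c.ι v) = (Q u v : ℂ)) (x y : W) : QC x y = QC y x := by
  have hflip : QC = QC.flip :=
    c.isBaseChange.algHom_ext _ _ fun u => c.isBaseChange.algHom_ext _ _ fun v => by
      rw [LinearMap.flip_apply, hQC, hQC, hQsymm]
  exact LinearMap.congr_fun₂ hflip x y

theorem extension_conj_conj (hQC : ∀ u v : V, QC (c.ι u) (c.ι v) = (Q u v : ℂ)) (x y : W) :
    QC (c.conj x) (c.conj y) = starRingEnd ℂ (QC x y) := by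
  obtain ⟨a, b, rfl⟩ := c.exists_re_im x
  obtain ⟨a', b', rfl⟩ := c.exists_re_im y
  rw [conj_ι_add_I_smul_ι, conj_ι_add_I_smul_ι]
  simp only [map_add, map_sub, map_smul, LinearMap.add_apply,
    LinearMap.sub_apply, LinearMap.smul_apply, hQC, smul_eq_mul, map_mul, conj_I, conj_ofReal]
  ring

end Form

section ConjStable

variable {c} {A : Submodule ℂ W}

theorem exists_mem_realPoints (hA : ∀ x ∈ A, c.conj x ∈ A) {x : W} (hx : x ∈ A) :
    ∃ a ∈ c.realPoints A, ∃ b ∈ c.realPoints A, x = c.ι a + I • c.ι b := by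
  obtain ⟨a, b, rfl⟩ := c.exists_re_im x
  have hconj : c.ι a - I • c.ι b ∈ A := c.conj_ι_add_I_smul_ι a b ▸ hA _ hx
  have ha : c.ι a ∈ A := by
    have h_two : (2 : ℂ) • c.ι a ∈ A := by
      rw [two_smul, ← add_add_sub_cancel (c.ι a) (c.ι a) (I • c.ι b)]
      exact A.add_mem hx hconj
    exact (A.smul_mem_iff two_ne_zero).1 h_two
  exact ⟨a, ha, b, (A.smul_mem_iff I_ne_zero).1 ((A.add_mem_iff_right ha).1 hx), rfl⟩

/-- A subspace of `V_ℂ` stable under conjugation, exhibited as the complexification of its real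
points. -/
def restrict (hA : ∀ x ∈ A, c.conj x ∈ A) : Complexification (c.realPoints A) A where
  ι := c.ι.restrict (q := A.restrictScalars ℝ) fun _ hu => hu
  conj := c.conj.restrict (p := A.restrictScalars ℝ) (q := A.restrictScalars ℝ) hA
  conj_conj x := Subtype.ext (c.conj_conj x)
  conj_smul a x := Subtype.ext (c.conj_smul a x)
  conj_ι u := Subtype.ext (c.conj_ι u)
  ι_injective u u' h := Subtype.ext (c.ι_injective (congrArg Subtype.val h))
  exists_re_im := by
    rintro ⟨x, hx⟩
    obtain ⟨a, ha, b, hb, rfl⟩ := exists_mem_realPoints hA hx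
    exact ⟨⟨a, ha⟩, ⟨b, hb⟩, rfl⟩
  fixed_eq_range := by
    rintro ⟨x, hx⟩ h
    obtain ⟨u, rfl⟩ := c.fixed_eq_range x (congrArg Subtype.val h)
    exact ⟨⟨u, hx⟩, rfl⟩

theorem finrank_realPoints (hA : ∀ x ∈ A, c.conj x ∈ A) :
    finrank ℝ (c.realPoints A) = finrank ℂ A :=
  (restrict hA).isBaseChange.finrank_eq.symm

end ConjStable

end Complexification

/-- `f` restricts to an isometry from the subspace `A` to the subspace `B` of `V_ℂ` for the
sesquilinear form `Q(x, conj y)`; only the values of `f` on `A` matter. -/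
structure IsHermitianIsometryOn {V W : Type*} [AddCommGroup V] [Module ℝ V]
    [AddCommGroup W] [Module ℂ W] (c : Complexification V W) (QC : W →ₗ[ℂ] W →ₗ[ℂ] ℂ)
    (A B : Submodule ℂ W) (f : W →ₗ[ℂ] W) : Prop where
  map_mem : ∀ x ∈ A, f x ∈ B
  map_conj : ∀ x ∈ A, ∀ y ∈ A, QC (f x) (c.conj (f y)) = QC x (c.conj y)

namespace IsHermitianIsometryOn

variable {V W : Type*} [AddCommGroup V] [Module ℝ V] [AddCommGroup W] [Module ℂ W]
  {c : Complexification V W} {Q : LinearMap.BilinForm ℝ V} {QC : W →ₗ[ℂ] W →ₗ[ℂ] ℂ}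
  {A B A' B' : Submodule ℂ W}

theorem congr {f f' : W →ₗ[ℂ] W} (hf : IsHermitianIsometryOn c QC A B f)
    (hff' : ∀ x ∈ A, f' x = f x) : IsHermitianIsometryOn c QC A B f' where
  map_mem x hx := hff' x hx ▸ hf.map_mem x hx
  map_conj x hx y hy := by rw [hff' x hx, hff' y hy, hf.map_conj x hx y hy]

theorem conjEnd {f : W →ₗ[ℂ] W} (hf : IsHermitianIsometryOn c QC A B f)
    (hQC : ∀ u v : V, QC (c.ι u) (c.ι v) = (Q u v : ℂ))
    (hA : ∀ x ∈ A', c.conj x ∈ A) (hB : ∀ x ∈ B, c.conj x ∈ B') :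
    IsHermitianIsometryOn c QC A' B' (c.conjEnd f) where
  map_mem x hx := hB _ (hf.map_mem _ (hA x hx))
  map_conj x hx y hy := calc
    QC (c.conj (f (c.conj x))) (c.conj (c.conj (f (c.conj y))))
      = starRingEnd ℂ (QC (f (c.conj x)) (c.conj (f (c.conj y)))) :=
        Complexification.extension_conj_conj hQC _ _
    _ = starRingEnd ℂ (QC (c.conj x) (c.conj (c.conj y))) := by
        rw [hf.map_conj _ (hA x hx) _ (hA y hy)]
    _ = QC x (c.conj y) := by
        rw [← Complexification.extension_conj_conj hQC, c.conj_conj, c.conj_conj]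

theorem complexify {g : V →ₗ[ℝ] V} (hQC : ∀ u v : V, QC (c.ι u) (c.ι v) = (Q u v : ℂ))
    (hA : ∀ x ∈ A, c.conj x ∈ A) (hgB : ∀ a ∈ c.realPoints A, g a ∈ c.realPoints B)
    (hgQ : ∀ a ∈ c.realPoints A, ∀ b ∈ c.realPoints A, Q (g a) (g b) = Q a b) :
    IsHermitianIsometryOn c QC A B (c.complexify g) where
  map_mem x hx := by
    obtain ⟨a, ha, b, hb, rfl⟩ := Complexification.exists_mem_realPoints hA hx
    rw [map_add, map_smul, c.complexify_ι, c.complexify_ι]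
    exact B.add_mem (hgB a ha) (B.smul_mem _ (hgB b hb))
  map_conj x hx y hy := by
    obtain ⟨a, ha, b, hb, rfl⟩ := Complexification.exists_mem_realPoints hA hx
    obtain ⟨a', ha', b', hb', rfl⟩ := Complexification.exists_mem_realPoints hA hy
    simp only [c.conj_ι_add_I_smul_ι, map_add, map_sub, map_smul, LinearMap.add_apply,
      LinearMap.smul_apply, c.complexify_ι, hQC, hgQ a ha a' ha', hgQ a ha b' hb',
      hgQ b hb a' ha', hgQ b hb b' hb']

end IsHermitianIsometryOn

namespace IsPolarizedHodgeStructure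

variable {V W : Type*} [AddCommGroup V] [Module ℝ V] [AddCommGroup W] [Module ℂ W]
  {c : Complexification V W} {Q : LinearMap.BilinForm ℝ V} {QC : W →ₗ[ℂ] W →ₗ[ℂ] ℂ} {w : ℕ}
  {A B : ℕ → Submodule ℂ W} {U : Submodule ℝ V}

theorem conj_mem_of_add_eq (h : IsPolarizedHodgeStructure c QC w A) {p q : ℕ} (hpq : p + q = w)
    {x : W} (hx : x ∈ A p) : c.conj x ∈ A q := by
  obtain rfl : q = w - p := by omega
  exact h.conj_mem p x hx

theorem induction_on (h : IsPolarizedHodgeStructure c QC w A) {P : W → Prop} (x : W)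
    (zero : P 0) (add : ∀ x y, P x → P y → P (x + y))
    (mem : ∀ p : Fin (w + 1), ∀ x ∈ A p, P x) : P x :=
  Submodule.iSup_induction (fun p : Fin (w + 1) => A p) (motive := P)
    (h.isInternal.submodule_iSup_eq_top ▸ Submodule.mem_top) mem zero add

/-- The Hermitian inner product on `V^{p,q}` given by the polarization, used to compare Hodge
subspaces. The arguments of `Q` are swapped because inner products here are conjugate-linear in the
first variable. -/
@[reducible]
def hodgeInner (h : IsPolarizedHodgeStructure c QC w A) (hw : Even w)
    (hQsymm : ∀ u v, Q u v = Q v u) (hQC : ∀ u v : V, QC (c.ι u) (c.ι v) = (Q u v : ℂ))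
    {p : ℕ} (hp : p ≤ w) : InnerProductSpace.Core ℂ (A p) where
  inner x y := I ^ p * (-I) ^ (w - p) * QC y (c.conj x)
  conj_inner_symm x y := by
    rw [map_mul, conj_I_pow_mul_neg_I_pow (by rwa [Nat.add_sub_cancel' hp]),
      ← Complexification.extension_conj_conj hQC, c.conj_conj,
      Complexification.extension_symm hQsymm hQC]
  re_inner_nonneg x := by
    by_cases hx : (x : W) = 0
    · simp [hx]
    · obtain ⟨r, hr, hxr⟩ := h.positivity p x x.2 hx
      rw [hxr]
      exact hr.le
  add_left x y z := by simp only [Submodule.coe_add, map_add, mul_add]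
  smul_left x y r := by
    simp only [Submodule.coe_smul, c.conj_smul, map_smul, smul_eq_mul]
    ring
  definite x hx := by
    by_contra hne
    obtain ⟨r, hr, hxr⟩ := h.positivity p x x.2 fun h0 => hne (Subtype.ext h0)
    exact hr.ne (by exact_mod_cast hx.symm.trans hxr)

theorem apply_self_pos (h : IsPolarizedHodgeStructure c QC w A)
    (hQC : ∀ u v : V, QC (c.ι u) (c.ι v) = (Q u v : ℂ)) {p : ℕ} (hp : p + p = w) {u : V}
    (hu : u ∈ c.realPoints (A p)) (hne : u ≠ 0) : 0 < Q u u := by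
  obtain ⟨r, hr, hur⟩ := h.positivity p _ hu ((map_ne_zero_iff c.ι c.ι_injective).2 hne)
  rw [← hp, Nat.add_sub_cancel, ← mul_pow, mul_neg, I_mul_I, neg_neg, one_pow, one_mul,
    c.conj_ι, hQC] at hur
  exact ofReal_injective hur ▸ hr

/-- The inner product `Q` on the real points of the middle Hodge subspace, used to extend the
identity of a subspace to a real isometry. -/
@[reducible]
def realInner (h : IsPolarizedHodgeStructure c QC w A) (hQsymm : ∀ u v, Q u v = Q v u)
    (hQC : ∀ u v : V, QC (c.ι u) (c.ι v) = (Q u v : ℂ)) {p : ℕ} (hp : p + p = w) :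
    InnerProductSpace.Core ℝ (c.realPoints (A p)) where
  inner x y := Q x y
  conj_inner_symm x y := hQsymm y x
  re_inner_nonneg x := by
    by_cases hx : (x : V) = 0
    · simp [hx]
    · exact (h.apply_self_pos hQC hp x.2 hx).le
  add_left x y z := by simp
  smul_left x y r := by simp
  definite x hx := by
    by_contra hne
    exact (h.apply_self_pos hQC hp x.2 fun h0 => hne (Subtype.ext h0)).ne' hx

theorem exists_isHermitianIsometryOn [FiniteDimensional ℝ V]
    (hA : IsPolarizedHodgeStructure c QC w A) (hB : IsPolarizedHodgeStructure c QC w B)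
    (hw : Even w) (hQsymm : ∀ u v, Q u v = Q v u)
    (hQC : ∀ u v : V, QC (c.ι u) (c.ι v) = (Q u v : ℂ)) {p : ℕ} (hp : p ≤ w)
    (hrank : finrank ℂ (A p) = finrank ℂ (B p)) :
    ∃ f : W →ₗ[ℂ] W, IsHermitianIsometryOn c QC (A p) (B p) f := by
  have := c.finiteDimensional
  obtain ⟨e, he, -⟩ := exists_linearEquiv_inner_eq_extending (hA.hodgeInner hw hQsymm hQC hp)
    (hB.hodgeInner hw hQsymm hQC hp) hrank ⊥ 0 fun x y => by
      rw [Subsingleton.elim x 0, Subsingleton.elim y 0]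
      rfl
  obtain ⟨f, hf⟩ := LinearMap.exists_extend ((B p).subtype ∘ₗ e.toLinearMap)
  have hfe (x : A p) : f x = e x := LinearMap.congr_fun hf x
  refine ⟨f, fun x hx => hfe ⟨x, hx⟩ ▸ (e ⟨x, hx⟩).2, fun x hx y hy => ?_⟩
  have hfactor : I ^ p * (-I) ^ (w - p) ≠ 0 :=
    mul_ne_zero (pow_ne_zero _ I_ne_zero) (pow_ne_zero _ (neg_ne_zero.2 I_ne_zero))
  rw [hfe ⟨x, hx⟩, hfe ⟨y, hy⟩]
  exact mul_left_cancel₀ hfactor (he ⟨y, hy⟩ ⟨x, hx⟩)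

theorem exists_real_isometry [FiniteDimensional ℝ V]
    (hA : IsPolarizedHodgeStructure c QC w A) (hB : IsPolarizedHodgeStructure c QC w B)
    (hQsymm : ∀ u v, Q u v = Q v u) (hQC : ∀ u v : V, QC (c.ι u) (c.ι v) = (Q u v : ℂ))
    {p : ℕ} (hp : p + p = w) (hrank : finrank ℂ (A p) = finrank ℂ (B p))
    (hUA : U ≤ c.realPoints (A p)) (hUB : U ≤ c.realPoints (B p)) :
    ∃ g : V →ₗ[ℝ] V, (∀ a ∈ c.realPoints (A p), g a ∈ c.realPoints (B p)) ∧
      (∀ a ∈ c.realPoints (A p), ∀ b ∈ c.realPoints (A p), Q (g a) (g b) = Q a b) ∧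
      ∀ u ∈ U, g u = u := by
  have hrank_real : finrank ℝ (c.realPoints (A p)) = finrank ℝ (c.realPoints (B p)) := by
    rw [Complexification.finrank_realPoints fun _ => hA.conj_mem_of_add_eq hp,
      Complexification.finrank_realPoints fun _ => hB.conj_mem_of_add_eq hp, hrank]
  obtain ⟨e, he, heU⟩ := exists_linearEquiv_inner_eq_extending
    (hA.realInner hQsymm hQC hp) (hB.realInner hQsymm hQC hp) hrank_real
    (U.submoduleOf (c.realPoints (A p)))
    (Submodule.inclusion hUB ∘ₗ (Submodule.submoduleOfEquivOfLe hUA).toLinearMap)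
    fun _ _ => rfl
  obtain ⟨g, hg⟩ := LinearMap.exists_extend ((c.realPoints (B p)).subtype ∘ₗ e.toLinearMap)
  have hge (x : c.realPoints (A p)) : g x = e x := LinearMap.congr_fun hg x
  refine ⟨g, fun a ha => hge ⟨a, ha⟩ ▸ (e ⟨a, ha⟩).2, fun a ha b hb => ?_, fun u hu => ?_⟩
  · rw [hge ⟨a, ha⟩, hge ⟨b, hb⟩]
    exact he ⟨a, ha⟩ ⟨b, hb⟩
  · exact (hge ⟨u, hUA hu⟩).trans (congrArg Subtype.val (heU ⟨⟨u, hUA hu⟩, hu⟩))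

theorem exists_conj_equivariant_isometries [FiniteDimensional ℝ V]
    (hA : IsPolarizedHodgeStructure c QC w A) (hB : IsPolarizedHodgeStructure c QC w B)
    (hw : Even w) (hQsymm : ∀ u v, Q u v = Q v u)
    (hQC : ∀ u v : V, QC (c.ι u) (c.ι v) = (Q u v : ℂ))
    (hrank : ∀ p, finrank ℂ (A p) = finrank ℂ (B p))
    (hUA : U ≤ c.realPoints (A (w / 2))) (hUB : U ≤ c.realPoints (B (w / 2))) :
    ∃ φ : Fin (w + 1) → W →ₗ[ℂ] W,
      (∀ p : Fin (w + 1), IsHermitianIsometryOn c QC (A p) (B p) (φ p) ∧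
        (p.rev = p → ∀ u ∈ U, φ p (c.ι u) = c.ι u)) ∧
      ∀ p : Fin (w + 1), φ p.rev = c.conjEnd (φ p) := by
  refine exists_equivariant_choice
    (P := fun (p : Fin (w + 1)) f => IsHermitianIsometryOn c QC (A p) (B p) f ∧
      (p.rev = p → ∀ u ∈ U, f (c.ι u) = c.ι u))
    Fin.rev_involutive c.conjEnd_involutive ?_ fun p => ?_
  · rintro p f ⟨hf, hfix⟩
    have hpw : (p : ℕ) + p.rev = w := val_add_val_rev p
    refine ⟨hf.conjEnd hQC (fun _ => hA.conj_mem_of_add_eq ((Nat.add_comm _ _).trans hpw))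
      fun _ => hB.conj_mem_of_add_eq hpw, fun hp u hu => ?_⟩
    rw [Fin.rev_rev] at hp
    rw [c.conjEnd_apply, c.conj_ι, hfix hp.symm u hu, c.conj_ι]
  by_cases hp : p.rev = p
  · have hmid : (p : ℕ) + p = w := by simpa only [hp] using val_add_val_rev p
    have hhalf : w / 2 = p := by omega
    rw [hhalf] at hUA hUB
    obtain ⟨g, hgB, hgQ, hgU⟩ := hA.exists_real_isometry hB hQsymm hQC hmid (hrank p) hUA hUB
    exact ⟨c.complexify g, ⟨.complexify hQC (fun _ => hA.conj_mem_of_add_eq hmid) hgB hgQ,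
      fun _ u hu => by rw [c.complexify_ι, hgU u hu]⟩, fun _ => c.conjEnd_complexify g⟩
  · obtain ⟨f, hf⟩ := hA.exists_isHermitianIsometryOn hB hw hQsymm hQC p.is_le (hrank p)
    exact ⟨f, ⟨hf, fun h => absurd h hp⟩, fun h => absurd h hp⟩

theorem conjEnd_eq_self (h : IsPolarizedHodgeStructure c QC w A)
    {φ : Fin (w + 1) → W →ₗ[ℂ] W} (hφ : ∀ p, φ p.rev = c.conjEnd (φ p)) {F : W →ₗ[ℂ] W}
    (hF : ∀ p : Fin (w + 1), ∀ x ∈ A p, F x = φ p x) : c.conjEnd F = F := by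
  ext x
  induction x using h.induction_on with
  | zero => simp only [map_zero]
  | add x y hx hy => rw [map_add, map_add, hx, hy]
  | mem p x hx =>
    rw [c.conjEnd_apply, hF p.rev _ (h.conj_mem_of_add_eq (val_add_val_rev p) hx), hφ,
      c.conjEnd_apply, c.conj_conj, c.conj_conj, hF p x hx]

theorem apply_apply_eq (hA : IsPolarizedHodgeStructure c QC w A)
    (hB : IsPolarizedHodgeStructure c QC w B) {F : W →ₗ[ℂ] W} (hFconj : c.conjEnd F = F)
    (hF : ∀ p : Fin (w + 1), IsHermitianIsometryOn c QC (A p) (B p) F) (x y : W) :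
    QC (F x) (F y) = QC x y := by
  induction x using hA.induction_on with
  | zero => simp only [map_zero, LinearMap.zero_apply]
  | add x x' hx hx' => simp only [map_add, LinearMap.add_apply, hx, hx']
  | mem p x hx =>
    induction y using hA.induction_on with
    | zero => simp only [map_zero]
    | add y y' hy hy' => simp only [map_add, hy, hy']
    | mem q y hy =>
      by_cases hpq : (p : ℕ) + q = w
      · have hy' : c.conj y ∈ A p := hA.conj_mem_of_add_eq ((Nat.add_comm _ _).trans hpq) hy
        calc
          QC (F x) (F y) = QC (F x) (c.conj (F (c.conj y))) := by rw [← c.conjEnd_apply, hFconj]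
          _ = QC x (c.conj (c.conj y)) := (hF p).map_conj x hx _ hy'
          _ = QC x y := by rw [c.conj_conj]
      · rw [hA.isotropic p q hpq x hx y hy,
          hB.isotropic p q hpq _ ((hF p).map_mem x hx) _ ((hF q).map_mem y hy)]

theorem exists_real_linearMap [FiniteDimensional ℝ V]
    (hA : IsPolarizedHodgeStructure c QC w A) (hB : IsPolarizedHodgeStructure c QC w B)
    (hw : Even w) (hQsymm : ∀ u v, Q u v = Q v u)
    (hQC : ∀ u v : V, QC (c.ι u) (c.ι v) = (Q u v : ℂ))
    (hrank : ∀ p, finrank ℂ (A p) = finrank ℂ (B p))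
    (hUA : U ≤ c.realPoints (A (w / 2))) (hUB : U ≤ c.realPoints (B (w / 2))) :
    ∃ g : V →ₗ[ℝ] V, (∀ u v, Q (g u) (g v) = Q u v) ∧ (∀ u ∈ U, g u = u) ∧
      ∀ p, ∀ x ∈ A p, c.complexify g x ∈ B p := by
  obtain ⟨φ, hφ, hφconj⟩ :=
    hA.exists_conj_equivariant_isometries hB hw hQsymm hQC hrank hUA hUB
  obtain ⟨F, hF⟩ := exists_linearMap_eqOn_of_isInternal hA.isInternal φ
  have hFconj : c.conjEnd F = F := hA.conjEnd_eq_self hφconj hF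
  have hFiso (p : Fin (w + 1)) : IsHermitianIsometryOn c QC (A p) (B p) F :=
    (hφ p).1.congr (hF p)
  obtain ⟨g, rfl⟩ := c.exists_complexify_eq hFconj
  refine ⟨g, fun u v => ?_, fun u hu => ?_, fun p x hx => ?_⟩
  · apply ofReal_injective
    rw [← hQC, ← hQC, ← c.complexify_ι, ← c.complexify_ι, hA.apply_apply_eq hB hFconj hFiso]
  · let mid : Fin (w + 1) := ⟨w / 2, by omega⟩
    have hmid : mid.rev = mid := by
      obtain ⟨n, rfl⟩ := hw
      ext
      simp only [mid, Fin.val_rev]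
      omega
    apply c.ι_injective
    rw [← c.complexify_ι, hF mid _ (hUA hu), (hφ mid).2 hmid u hu]
  · rcases le_or_gt p w with hp | hp
    · exact (hFiso ⟨p, Nat.lt_succ_of_le hp⟩).map_mem x hx
    · rw [hA.bot_of_gt p hp, Submodule.mem_bot] at hx
      rw [hx, map_zero]
      exact zero_mem _

end IsPolarizedHodgeStructure

theorem stabilizer_transitive_on_hodge_locus_general
    {V W : Type*} [AddCommGroup V] [Module ℝ V] [FiniteDimensional ℝ V]
    [AddCommGroup W] [Module ℂ W]
    (c : Complexification V W)
    (Q : LinearMap.BilinForm ℝ V) (hQsymm : ∀ u v, Q u v = Q v u)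
    (hQnd : Q.Nondegenerate)
    (QC : W →ₗ[ℂ] W →ₗ[ℂ] ℂ) (hQC : ∀ u v : V, QC (c.ι u) (c.ι v) = (Q u v : ℂ))
    (w : ℕ) (hweven : Even w)
    (U : Submodule ℝ V)
    (Vpq₁ Vpq₂ : ℕ → Submodule ℂ W)
    (h₁ : IsPolarizedHodgeStructure c QC w Vpq₁)
    (h₂ : IsPolarizedHodgeStructure c QC w Vpq₂)
    (hU₁ : U ≤ c.realPoints (Vpq₁ (w / 2))) (hU₂ : U ≤ c.realPoints (Vpq₂ (w / 2)))
    (htype : ∀ p, finrank ℂ (Vpq₁ p) = finrank ℂ (Vpq₂ p)) :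
    ∃ (g : V →ₗ[ℝ] V) (gC : W →ₗ[ℂ] W),
      Bijective g ∧
      (∀ u u' : V, Q (g u) (g u') = Q u u') ∧
      (∀ u ∈ U, g u = u) ∧
      (∀ u : V, gC (c.ι u) = c.ι (g u)) ∧
      (∀ p, Submodule.map gC (Vpq₁ p) = Vpq₂ p) := by
  have := c.finiteDimensional
  obtain ⟨g, hgQ, hgU, hgmem⟩ := h₁.exists_real_linearMap h₂ hweven hQsymm hQC htype hU₁ hU₂
  have hg : Injective g := (injective_iff_map_eq_zero g).2 fun u hu =>
    hQnd.1 u fun u' => by rw [← hgQ, hu, map_zero, LinearMap.zero_apply]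
  have hgC : Injective (c.complexify g) := c.complexify_injective_of_injective hg
  refine ⟨g, c.complexify g, ⟨hg, LinearMap.injective_iff_surjective.1 hg⟩, hgQ, hgU,
    c.complexify_ι g, fun p => ?_⟩
  refine Submodule.eq_of_le_of_finrank_eq (Submodule.map_le_iff_le_comap.2 (hgmem p)) ?_
  rw [← (Submodule.equivMapOfInjective _ hgC _).finrank_eq, htype]

/-- **Transitivity of `G_v` on the Hodge locus of `v`.** Let `v ∈ V` with `Q(v,v) > 0`.
For any two `Q`-polarized Hodge structures of weight `w` on `V` of the same type for
which `v` lies in `V^{w/2,w/2}`, there is `g ∈ O(V,Q)` with `g v = v` whose `ℂ`-linear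
extension maps the Hodge subspaces of the first onto those of the second. -/
theorem stabilizer_transitive_on_hodge_locus
    {V W : Type*} [AddCommGroup V] [Module ℝ V] [FiniteDimensional ℝ V]
    [AddCommGroup W] [Module ℂ W]
    (c : Complexification V W)
    (Q : LinearMap.BilinForm ℝ V) (hQsymm : ∀ u v, Q u v = Q v u)
    (hQnd : Q.Nondegenerate)
    (QC : W →ₗ[ℂ] W →ₗ[ℂ] ℂ) (hQC : ∀ u v : V, QC (c.ι u) (c.ι v) = (Q u v : ℂ))
    (w : ℕ) (hw : 0 < w) (hweven : Even w)
    (v : V) (hv : 0 < Q v v)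
    (Vpq₁ Vpq₂ : ℕ → Submodule ℂ W)
    (h₁ : IsPolarizedHodgeStructure c QC w Vpq₁)
    (h₂ : IsPolarizedHodgeStructure c QC w Vpq₂)
    (hv₁ : c.ι v ∈ Vpq₁ (w / 2)) (hv₂ : c.ι v ∈ Vpq₂ (w / 2))
    (htype : ∀ p, Module.finrank ℂ (Vpq₁ p) = Module.finrank ℂ (Vpq₂ p)) :
    ∃ (g : V →ₗ[ℝ] V) (gC : W →ₗ[ℂ] W),
      Function.Bijective g ∧
      (∀ u u' : V, Q (g u) (g u') = Q u u') ∧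
      g v = v ∧
      (∀ u : V, gC (c.ι u) = c.ι (g u)) ∧
      (∀ p, Submodule.map gC (Vpq₁ p) = Vpq₂ p) := by
  obtain ⟨g, gC, hg, hgQ, hgU, hgC, hmap⟩ := stabilizer_transitive_on_hodge_locus_general c Q hQsymm
    hQnd QC hQC w hweven (Submodule.span ℝ {v}) Vpq₁ Vpq₂ h₁ h₂
    ((Submodule.span_singleton_le_iff_mem _ _).2 hv₁)
    ((Submodule.span_singleton_le_iff_mem _ _).2 hv₂) htype
  exact ⟨g, gC, hg, hgQ, hgU v (Submodule.mem_span_singleton_self v), hgC, hmap⟩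
end
end
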